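/- Let G ⊆ UT(n,ℝ) be a real unipotent group and let H, N be real algebraic subgroups of G with N normal in G. Let α ∈ G^♯ and assume that there are b, c ∈ G such that the cosets bN and cH are both near α. Then bN ∩ cH ≠ ∅, the set bN ∩ cH is a coset of N ∩ H, and the coset bN ∩ cH is near α. -/

import Mathlib

open Pointwise Filter

noncomputable section

/-- Square matrices of size `n` over `R`. -/
abbrev Mat (n : ℕ) (R : Type) : Type := Matrix (Fin n) (Fin n) R

/-- The set `UT(n,ℝ)` of upper triangular matrices with `1`s on the diagonal. -/
def UTset (n : ℕ) : Set (Mat n ℝ) :=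
  {A | (∀ i, A i i = 1) ∧ ∀ i j : Fin n, (j : ℕ) < (i : ℕ) → A i j = 0}

/-- The entries of a matrix, as a point of `ℝ^(n²)`. -/
def matEval {n : ℕ} (A : Mat n ℝ) : Fin n × Fin n → ℝ := fun ij => A ij.1 ij.2

/-- A real unipotent group: a subgroup of `UT(n,ℝ)` which is the common zero set in
`UT(n,ℝ)` of a family of real polynomials in the matrix entries. -/
def IsRealUnipotentGroup (n : ℕ) (G : Set (Mat n ℝ)) : Prop :=
  (∃ S : Set (MvPolynomial (Fin n × Fin n) ℝ),
      G = {A | A ∈ UTset n ∧ ∀ p ∈ S, MvPolynomial.eval (matEval A) p = 0}) ∧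
    (1 : Mat n ℝ) ∈ G ∧ (∀ a ∈ G, ∀ b ∈ G, a * b ∈ G) ∧ ∀ a ∈ G, a⁻¹ ∈ G

/-- A real algebraic subgroup of a real unipotent group `G`. -/
def IsRealAlgSubgroup (n : ℕ) (G H : Set (Mat n ℝ)) : Prop :=
  H ⊆ G ∧ IsRealUnipotentGroup n H

/-- `N` is a normal subgroup-set of `G`. -/
def IsNormalIn (n : ℕ) (G N : Set (Mat n ℝ)) : Prop :=
  ∀ g ∈ G, ∀ x ∈ N, g * x * g⁻¹ ∈ N

/-- `Γ` is a lattice in `G`: a discrete subgroup which is cocompact, i.e. there is a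
compact `K ⊆ G` with `K·Γ = G` (equivalently, `G/Γ` is compact). -/
def IsLatticeIn (n : ℕ) (G Γ : Set (Mat n ℝ)) : Prop :=
  Γ ⊆ G ∧ (1 : Mat n ℝ) ∈ Γ ∧ (∀ a ∈ Γ, ∀ b ∈ Γ, a * b ∈ Γ) ∧ (∀ a ∈ Γ, a⁻¹ ∈ Γ) ∧
    DiscreteTopology ↥Γ ∧
    ∃ K : Set (Mat n ℝ), K ⊆ G ∧ IsCompact K ∧ ∀ g ∈ G, ∃ k ∈ K, ∃ γ ∈ Γ, g = k * γ

/-- `H` is `Γ`-rational: `Γ ∩ H` is a lattice in `H`. -/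
def IsRationalFor (n : ℕ) (Γ H : Set (Mat n ℝ)) : Prop :=
  IsLatticeIn n H (Γ ∩ H)

/-- The hyperreal matrix represented by a sequence of real matrices. -/
def matOfSeq (n : ℕ) (u : ℕ → Mat n ℝ) : Mat n Hyperreal :=
  Matrix.of fun i j => Hyperreal.ofSeq fun k => u k i j

/-- The nonstandard extension `S^♯` of a set `S` of real matrices: hyperreal matrices
represented by sequences landing in `S` on a set of indices in the ultrafilter. -/
def matSharp (n : ℕ) (S : Set (Mat n ℝ)) : Set (Mat n Hyperreal) :=
  {A | ∃ u : ℕ → Mat n ℝ, (∀ᶠ k in hyperfilter ℕ, u k ∈ S) ∧ A = matOfSeq n u}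

/-- The canonical embedding of real matrices into hyperreal matrices. -/
def matCast {n : ℕ} (A : Mat n ℝ) : Mat n Hyperreal :=
  Matrix.of fun i j => (A i j : Hyperreal)

/-- `μ(G)`: elements of `G^♯` all of whose entries are infinitesimally close to the
corresponding entries of the identity matrix. -/
def muSet (n : ℕ) (G : Set (Mat n ℝ)) : Set (Mat n Hyperreal) :=
  {A | A ∈ matSharp n G ∧ ∀ i j, Hyperreal.Infinitesimal (A i j - (1 : Mat n Hyperreal) i j)}

/-- The coset `gH` is near `α`, i.e. `α ∈ μ(G)·g·H^♯`. -/
def NearCoset (n : ℕ) (G : Set (Mat n ℝ)) (g : Mat n ℝ) (H : Set (Mat n ℝ))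
    (α : Mat n Hyperreal) : Prop :=
  α ∈ muSet n G * ({matCast g} * matSharp n H)

/-- The set of standard parts of the finite elements of a set of hyperreal matrices. -/
def matStSet (n : ℕ) (A : Set (Mat n Hyperreal)) : Set (Mat n ℝ) :=
  {B | ∃ a ∈ A, ∀ i j, Hyperreal.IsSt (a i j) (B i j)}

/-- A polynomial map `ℝ^d → Mat n ℝ`. -/
def IsPolyMapVec (d n : ℕ) (F : (Fin d → ℝ) → Mat n ℝ) : Prop :=
  ∃ P : Fin n → Fin n → MvPolynomial (Fin d) ℝ,
    ∀ x i j, F x i j = MvPolynomial.eval x (P i j)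

/-- The inclusion `ℝ →+* ℝ*` as a ring homomorphism. -/
def realHyperRingHom : ℝ →+* Hyperreal where
  toFun r := (r : Hyperreal)
  map_one' := Hyperreal.coe_one
  map_mul' := Hyperreal.coe_mul
  map_zero' := Hyperreal.coe_zero
  map_add' := Hyperreal.coe_add

/-- A semialgebraic subset of matrix space: a finite union of sets defined by finitely
many polynomial equations and finitely many strict polynomial inequalities. -/
def IsSemialgebraic (n : ℕ) (S : Set (Mat n ℝ)) : Prop :=
  ∃ (k : ℕ) (P Q : Fin k → Finset (MvPolynomial (Fin n × Fin n) ℝ)),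
    S = ⋃ t : Fin k, {A | (∀ p ∈ P t, MvPolynomial.eval (matEval A) p = 0) ∧
      ∀ q ∈ Q t, 0 < MvPolynomial.eval (matEval A) q}

/-!
For a unipotent matrix `a` the binomial series of `a ^ t` is a polynomial in `t`, with velocity
`log a` at `t = 0` and `exp (t • log a) = a ^ t`. As `ℕ` is Zariski dense in `ℝ`, an algebraic
group containing `a` contains every `a ^ t`, so `log a` lies in its Lie algebra. If `H` normalizes
`N`, the same argument applied to the curve `(h y) ^ t * h ^ (-t)`, which lies in `N` for `t` in
`ℕ`, shows that `log` maps the product set `HN` into `Lie H + Lie N`. A linear map `P` splitting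
this sum gives a continuous factorization `g = φ g * ((φ g)⁻¹ * g)` of the elements of `HN`, where
`φ = exp ∘ P ∘ log`.

Write `α = u b v = w c x` with `u`, `w` infinitesimally close to `1`, `v` in `N^♯` and `x` in
`H^♯`. Then `x v⁻¹` lies in `(HN)^♯` and is infinitesimally close to `c⁻¹ b`. By the factorization
`HN` is closed, so `c⁻¹ b ∈ HN` and `bN` meets `cH`. Replacing `b` and `c` by a common point `e` of
both cosets, `x v⁻¹` is close to `1`, hence so is `φ (x v⁻¹)`; moving this factor from `x` to `w`
leaves `x` in `N^♯ ∩ H^♯`.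
-/

open scoped Topology MatrixGroups
open NormedSpace

section Normalizer

variable {Γ : Type*} [Group Γ] {N : Subgroup Γ} {a y : Γ}

lemma inv_pow_mul_mul_pow_mem (ha : a ∈ Subgroup.normalizer (N : Set Γ)) (hy : y ∈ N) (k : ℕ) :
    (a ^ k)⁻¹ * (a * y) ^ k ∈ N := by
  induction k with
  | zero => simp [N.one_mem]
  | succ k ih =>
    have hconj : a⁻¹ * ((a ^ k)⁻¹ * (a * y) ^ k) * a ∈ N :=
      (Subgroup.mem_normalizer_iff''.1 ha _).1 ih
    have hsplit : (a ^ (k + 1))⁻¹ * (a * y) ^ (k + 1) =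
        a⁻¹ * ((a ^ k)⁻¹ * (a * y) ^ k) * a * y := by
      simp only [pow_succ, mul_inv_rev, mul_assoc]
    exact hsplit ▸ N.mul_mem hconj hy

lemma mul_pow_mul_inv_pow_mem (ha : a ∈ Subgroup.normalizer (N : Set Γ)) (hy : y ∈ N) (k : ℕ) :
    (a * y) ^ k * (a ^ k)⁻¹ ∈ N := by
  have hconj := (Subgroup.mem_normalizer_iff.1 (Subgroup.pow_mem _ ha k) _).1
    (inv_pow_mul_mul_pow_mem ha hy k)
  rwa [mul_inv_cancel_left] at hconj

end Normalizer

section LinearAlgebra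

variable {𝕜 V : Type*} [Field 𝕜] [AddCommGroup V] [Module 𝕜 V]

lemma exists_linearMap_splitting_sup (p q : Submodule 𝕜 V) :
    ∃ P : V →ₗ[𝕜] V, ∀ z ∈ p ⊔ q, P z ∈ p ∧ z - P z ∈ q := by
  let π : p →ₗ[𝕜] V ⧸ q := q.mkQ ∘ₗ p.subtype
  obtain ⟨g, hg⟩ := π.rangeRestrict.exists_rightInverse_of_surjective π.range_rangeRestrict
  obtain ⟨g', hg'⟩ := LinearMap.exists_extend g
  have hπ : ∀ x, π (g' (π x)) = π x := fun x => by
    have h1 : g' (π x) = g (π.rangeRestrict x) := LinearMap.congr_fun hg' (π.rangeRestrict x)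
    rw [h1]
    exact congrArg Subtype.val (LinearMap.congr_fun hg (π.rangeRestrict x))
  refine ⟨p.subtype ∘ₗ g' ∘ₗ q.mkQ, fun z hz => ⟨(g' (q.mkQ z)).2, ?_⟩⟩
  obtain ⟨x, hx, y, hy, rfl⟩ := Submodule.mem_sup.1 hz
  have hz : q.mkQ (x + y) = π ⟨x, hx⟩ := by simpa [π] using hy
  rw [← Submodule.Quotient.mk_eq_zero, Submodule.Quotient.mk_sub, sub_eq_zero]
  exact hz.trans (by rw [← hπ, ← hz]; rfl)

end LinearAlgebra

lemma units_tendsto_iff_tendsto_val {R ι : Type*} [NormedRing R] [CompleteSpace R] {l : Filter ι}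
    {f : ι → Rˣ} {a : Rˣ} : Tendsto f l (𝓝 a) ↔ Tendsto (fun i => (f i : R)) l (𝓝 (a : R)) :=
  Units.isOpenEmbedding_val.isEmbedding.tendsto_nhds_iff

lemma hasDerivAt_comp_mul_const_zero {E : Type*} [NormedAddCommGroup E] [NormedSpace ℝ E]
    {γ : ℝ → E} {X : E} (hγ : HasDerivAt γ X 0) (t : ℝ) :
    HasDerivAt (fun s => γ (s * t)) (t • X) 0 := by
  simpa [Function.comp_def] using
    hγ.scomp_of_eq 0 ((hasDerivAt_id (0 : ℝ)).mul_const t) (zero_mul t).symm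

section Exponential

variable {𝔸 : Type*} [NormedRing 𝔸] [NormedAlgebra ℝ 𝔸] [CompleteSpace 𝔸]

/-- The exponential of a real Banach algebra, as a map into its group of units. -/
def expUnit (X : 𝔸) : 𝔸ˣ where
  val := exp X
  inv := exp (-X)
  val_inv := by
    let _ := NormedAlgebra.restrictScalars ℚ ℝ 𝔸
    rw [← exp_add_of_commute ((Commute.refl X).neg_right), add_neg_cancel, exp_zero]
  inv_val := by
    let _ := NormedAlgebra.restrictScalars ℚ ℝ 𝔸
    rw [← exp_add_of_commute ((Commute.refl X).neg_left), neg_add_cancel, exp_zero]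

@[simp]
lemma val_expUnit (X : 𝔸) : (expUnit X : 𝔸) = exp X := rfl

@[simp]
lemma expUnit_zero : expUnit (0 : 𝔸) = 1 := Units.ext exp_zero

lemma expUnit_neg (X : 𝔸) : expUnit (-X) = (expUnit X)⁻¹ := Units.ext rfl

lemma continuous_expUnit : Continuous (expUnit : 𝔸 → 𝔸ˣ) := by
  let _ := NormedAlgebra.restrictScalars ℚ ℝ 𝔸
  exact Units.isOpenEmbedding_val.isEmbedding.continuous_iff.2 exp_continuous

/-- The proof takes the logarithm of `γ` with a local inverse of `exp` at `0`. -/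
lemma tendsto_pow_exp_of_hasDerivAt {γ : ℝ → 𝔸} {X : 𝔸} (h0 : γ 0 = 1)
    (hγ : HasDerivAt γ X 0) :
    Tendsto (fun k : ℕ => γ (k : ℝ)⁻¹ ^ k) atTop (𝓝 (exp X)) := by
  let _ := NormedAlgebra.restrictScalars ℚ ℝ 𝔸
  have hexp : HasStrictFDerivAt (exp : 𝔸 → 𝔸)
      ((ContinuousLinearEquiv.refl ℝ 𝔸 : 𝔸 ≃L[ℝ] 𝔸) : 𝔸 →L[ℝ] 𝔸) 0 :=
    hasStrictFDerivAt_exp_zero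
  let ℓ := hexp.localInverse exp _ 0
  have hℓ1 : ℓ 1 = 0 := by simpa using hexp.localInverse_apply_image
  have hℓ : HasFDerivAt ℓ (ContinuousLinearMap.id ℝ 𝔸) (γ 0) := by
    simpa [h0] using hexp.to_localInverse.hasFDerivAt
  have hexpℓ : ∀ᶠ t in 𝓝 (0 : ℝ), exp (ℓ (γ t)) = γ t := by
    have := hexp.eventually_right_inverse
    rw [exp_zero, ← h0] at this
    exact hγ.continuousAt.eventually this
  have hslope : Tendsto (fun t : ℝ => t⁻¹ • ℓ (γ t)) (𝓝[≠] 0) (𝓝 X) := by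
    simpa [h0, hℓ1] using (hℓ.comp_hasDerivAt 0 hγ).tendsto_slope_zero
  have hinv : Tendsto (fun k : ℕ => (k : ℝ)⁻¹) atTop (𝓝[≠] 0) :=
    tendsto_nhdsWithin_iff.2 ⟨tendsto_inv_atTop_nhds_zero_nat,
      (eventually_ne_atTop 0).mono fun k hk => by simpa using hk⟩
  refine ((exp_continuous.tendsto X).comp (hslope.comp hinv)).congr' ?_
  filter_upwards [(hinv.mono_right nhdsWithin_le_nhds).eventually hexpℓ] with k hk
  simp only [Function.comp_apply, inv_inv, Nat.cast_smul_eq_nsmul, exp_nsmul, hk]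

lemma hasDerivAt_exp_smul_zero (X : 𝔸) : HasDerivAt (fun t : ℝ => exp (t • X)) X 0 := by
  simpa using hasDerivAt_exp_smul_const (𝕂 := ℝ) X 0

lemma tendsto_pow_expUnit_of_hasDerivAt {γ : ℝ → 𝔸ˣ} {X : 𝔸} (h0 : γ 0 = 1)
    (hγ : HasDerivAt (fun t => (γ t : 𝔸)) X 0) :
    Tendsto (fun k : ℕ => γ (k : ℝ)⁻¹ ^ k) atTop (𝓝 (expUnit X)) :=
  units_tendsto_iff_tendsto_val.2 <| by
    simpa using tendsto_pow_exp_of_hasDerivAt (by simp [h0]) hγ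

lemma expUnit_mem_of_hasDerivAt {K : Subgroup 𝔸ˣ} (hK : IsClosed (K : Set 𝔸ˣ)) {γ : ℝ → 𝔸ˣ}
    {X : 𝔸} (h0 : γ 0 = 1) (hγ : HasDerivAt (fun t => (γ t : 𝔸)) X 0) (hmem : ∀ t, γ t ∈ K) :
    expUnit X ∈ K :=
  hK.mem_of_tendsto (tendsto_pow_expUnit_of_hasDerivAt h0 hγ)
    (Eventually.of_forall fun k => K.pow_mem (hmem _) k)

lemma hasDerivAt_expUnit_mul_expUnit (X Y : 𝔸) :
    HasDerivAt (fun t : ℝ => ((expUnit (t • X) * expUnit (t • Y) : 𝔸ˣ) : 𝔸)) (X + Y) 0 := by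
  simpa using (hasDerivAt_exp_smul_zero X).fun_mul (hasDerivAt_exp_smul_zero Y)

/-- The Lie algebra of a closed subgroup `K` of the group of units, as the space of velocities
of its one-parameter subgroups. -/
def lieSubmodule (K : Subgroup 𝔸ˣ) (hK : IsClosed (K : Set 𝔸ˣ)) : Submodule ℝ 𝔸 where
  carrier := {X | ∀ t : ℝ, expUnit (t • X) ∈ K}
  zero_mem' t := by simp [K.one_mem]
  smul_mem' c X hX t := by simpa only [smul_smul] using hX (t * c)
  add_mem' {X Y} hX hY t := by
    rw [smul_add]
    refine expUnit_mem_of_hasDerivAt hK (by simp) (hasDerivAt_expUnit_mul_expUnit (t • X) (t • Y))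
      fun s => ?_
    simpa only [smul_smul] using K.mul_mem (hX (s * t)) (hY (s * t))

lemma expUnit_mem_of_mem_lieSubmodule {K : Subgroup 𝔸ˣ} {hK : IsClosed (K : Set 𝔸ˣ)} {X : 𝔸}
    (hX : X ∈ lieSubmodule K hK) : expUnit X ∈ K := by
  simpa using hX 1

lemma mem_lieSubmodule_of_hasDerivAt {K : Subgroup 𝔸ˣ} (hK : IsClosed (K : Set 𝔸ˣ))
    {γ : ℝ → 𝔸ˣ} {X : 𝔸} (h0 : γ 0 = 1) (hγ : HasDerivAt (fun t => (γ t : 𝔸)) X 0)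
    (hmem : ∀ t, γ t ∈ K) : X ∈ lieSubmodule K hK := fun t =>
  expUnit_mem_of_hasDerivAt hK (by simpa using h0) (hasDerivAt_comp_mul_const_zero hγ t)
    fun s => hmem (s * t)

lemma inv_expUnit_mul_expUnit_add_mem {H N : Subgroup 𝔸ˣ} {hH : IsClosed (H : Set 𝔸ˣ)}
    {hN : IsClosed (N : Set 𝔸ˣ)} (hHN : H ≤ Subgroup.normalizer (N : Set 𝔸ˣ)) {X Y : 𝔸}
    (hX : X ∈ lieSubmodule H hH) (hY : Y ∈ lieSubmodule N hN) :
    (expUnit X)⁻¹ * expUnit (X + Y) ∈ N := by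
  have hXlim := tendsto_pow_expUnit_of_hasDerivAt (γ := fun t => expUnit (t • X)) (by simp)
    (hasDerivAt_exp_smul_zero X)
  have hXYlim := tendsto_pow_expUnit_of_hasDerivAt (by simp) (hasDerivAt_expUnit_mul_expUnit X Y)
  exact hN.mem_of_tendsto (hXlim.inv.mul hXYlim)
    (Eventually.of_forall fun k => inv_pow_mul_mul_pow_mem (hHN (hX _)) (hY _) k)

end Exponential

section UnipotentPowers

open Polynomial

section Truncation

variable {R A : Type*} [CommRing R] [Ring A] [Algebra R A] {x : A} {d : ℕ}

lemma aeval_trunc_coe (hx : x ^ d = 0) (p : R[X]) :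
    aeval x (PowerSeries.trunc d (p : PowerSeries R)) = aeval x p := by
  have hdvd : X ^ d ∣ PowerSeries.trunc d (p : PowerSeries R) - p :=
    X_pow_dvd_iff.2 fun k hk => by simp [PowerSeries.coeff_trunc, hk]
  obtain ⟨q, hq⟩ := hdvd
  rw [← sub_eq_zero, ← map_sub, hq, map_mul, map_pow, aeval_X, hx, zero_mul]

lemma aeval_trunc_mul (hx : x ^ d = 0) (f g : PowerSeries R) :
    aeval x (PowerSeries.trunc d (f * g)) =
      aeval x (PowerSeries.trunc d f) * aeval x (PowerSeries.trunc d g) := by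
  rw [← PowerSeries.trunc_trunc_mul_trunc, ← Polynomial.coe_mul, aeval_trunc_coe hx, map_mul]

end Truncation

/-- The polynomial `X (X - 1) ⋯ (X - j + 1) / j!`, whose value at `t` is the generalized
binomial coefficient `Ring.choose t j`. -/
def choosePoly (j : ℕ) : ℝ[X] := C (j.factorial : ℝ)⁻¹ * descPochhammer ℝ j

lemma eval_choosePoly (t : ℝ) (j : ℕ) : (choosePoly j).eval t = Ring.choose t j := by
  rw [choosePoly, eval_C_mul, Ring.choose_eq_smul, smul_eq_mul, ← aeval_eq_smeval,
    ← descPochhammer_map (algebraMap ℤ ℝ), eval_map_algebraMap]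

variable {A : Type*} [Ring A] [Algebra ℝ A]

/-- The real power `a ^ t` of a unipotent element `a`, where `(a - 1) ^ d = 0`: the binomial
series of `(1 + (a - 1)) ^ t` cut off at degree `d`. -/
def unipotentPow (d : ℕ) (a : A) (t : ℝ) : A :=
  ∑ j ∈ Finset.range d, (choosePoly j).eval t • (a - 1) ^ j

/-- The logarithm of a unipotent element `a`, where `(a - 1) ^ d = 0`, as the velocity at `0` of
`t ↦ a ^ t`; the coefficient of `(a - 1) ^ j` is `(-1) ^ (j + 1) / j` for `0 < j < d`. -/
def unipotentLog (d : ℕ) (a : A) : A :=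
  ∑ j ∈ Finset.range d, (choosePoly j).derivative.eval 0 • (a - 1) ^ j

lemma unipotentPow_eq_aeval_trunc (d : ℕ) (a : A) (t : ℝ) :
    unipotentPow d a t =
      aeval (a - 1) (PowerSeries.trunc d (PowerSeries.binomialSeries ℝ t)) := by
  simp [unipotentPow, eval_choosePoly, aeval_def, PowerSeries.eval₂_trunc_eq_sum_range,
    Algebra.smul_def]

variable {d : ℕ} {a : A}

lemma unipotentPow_add (ha : (a - 1) ^ d = 0) (s t : ℝ) :
    unipotentPow d a (s + t) = unipotentPow d a s * unipotentPow d a t := by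
  simp only [unipotentPow_eq_aeval_trunc, PowerSeries.binomialSeries_add, aeval_trunc_mul ha]

lemma unipotentPow_zero (ha : (a - 1) ^ d = 0) : unipotentPow d a 0 = 1 := by
  rw [unipotentPow_eq_aeval_trunc, PowerSeries.binomialSeries_zero, ← Polynomial.coe_one,
    aeval_trunc_coe ha, map_one]

lemma unipotentPow_one (ha : (a - 1) ^ d = 0) : unipotentPow d a 1 = a := by
  have hseries : PowerSeries.binomialSeries ℝ (1 : ℝ) = ((1 + X : ℝ[X]) : PowerSeries ℝ) := by
    simpa using PowerSeries.binomialSeries_nat (A := ℝ) (R := ℝ) 1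
  rw [unipotentPow_eq_aeval_trunc, hseries, aeval_trunc_coe ha, map_add, map_one, aeval_X,
    add_sub_cancel]

lemma unipotentPow_natCast_mul (ha : (a - 1) ^ d = 0) (k : ℕ) (t : ℝ) :
    unipotentPow d a (k * t) = unipotentPow d a t ^ k := by
  induction k with
  | zero => simp [unipotentPow_zero ha]
  | succ k ih => rw [Nat.cast_succ, add_one_mul, unipotentPow_add ha, ih, pow_succ]

lemma unipotentPow_natCast (ha : (a - 1) ^ d = 0) (k : ℕ) : unipotentPow d a k = a ^ k := by
  simpa [unipotentPow_one ha] using unipotentPow_natCast_mul ha k 1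

end UnipotentPowers

section UnipotentExp

variable {𝔸 : Type*} [NormedRing 𝔸] [NormedAlgebra ℝ 𝔸] {d : ℕ}

lemma unipotentLog_one : unipotentLog d (1 : 𝔸) = 0 := by
  refine Finset.sum_eq_zero fun j _ => ?_
  rcases j with _ | j <;> simp [choosePoly]

lemma continuous_unipotentLog : Continuous (unipotentLog d : 𝔸 → 𝔸) := by
  unfold unipotentLog
  fun_prop

lemma hasDerivAt_unipotentPow (a : 𝔸) :
    HasDerivAt (unipotentPow d a) (unipotentLog d a) 0 :=
  HasDerivAt.fun_sum fun j _ => ((choosePoly j).hasDerivAt 0).smul_const _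

variable [CompleteSpace 𝔸]

lemma exp_smul_unipotentLog {a : 𝔸} (ha : (a - 1) ^ d = 0) (t : ℝ) :
    exp (t • unipotentLog d a) = unipotentPow d a t := by
  refine tendsto_nhds_unique (tendsto_pow_exp_of_hasDerivAt ?_ <|
    hasDerivAt_comp_mul_const_zero (hasDerivAt_unipotentPow a) t) (tendsto_const_nhds.congr' ?_)
  · rw [zero_mul, unipotentPow_zero ha]
  · filter_upwards [eventually_ne_atTop 0] with k hk
    rw [← unipotentPow_natCast_mul ha, mul_inv_cancel_left₀ (Nat.cast_ne_zero.2 hk)]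

lemma expUnit_natCast_smul_unipotentLog {a : 𝔸ˣ} (ha : ((a : 𝔸) - 1) ^ d = 0) (k : ℕ) :
    expUnit ((k : ℝ) • unipotentLog d (a : 𝔸)) = a ^ k :=
  Units.ext <| by simp [exp_smul_unipotentLog ha, unipotentPow_natCast ha]

lemma expUnit_unipotentLog {a : 𝔸ˣ} (ha : ((a : 𝔸) - 1) ^ d = 0) :
    expUnit (unipotentLog d (a : 𝔸)) = a := by
  simpa using expUnit_natCast_smul_unipotentLog ha 1

end UnipotentExp

section TopologicalGroup

variable {Γ : Type*} [Group Γ]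

lemma leftCoset_eq_of_mem {K : Subgroup Γ} {g e : Γ} (he : e ∈ g • (K : Set Γ)) :
    g • (K : Set Γ) = e • (K : Set Γ) :=
  (leftCoset_eq_iff K).2 ((mem_leftCoset_iff g).1 he)

lemma leftCoset_inter_leftCoset_eq {K L : Subgroup Γ} {g g' e : Γ}
    (he : e ∈ g • (K : Set Γ) ∩ g' • (L : Set Γ)) :
    g • (K : Set Γ) ∩ g' • (L : Set Γ) = e • ((K ⊓ L : Subgroup Γ) : Set Γ) := by
  rw [Subgroup.coe_inf, Set.smul_set_inter, leftCoset_eq_of_mem he.1, leftCoset_eq_of_mem he.2]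

variable [TopologicalSpace Γ] {G H N : Subgroup Γ}

/-- A continuous choice, for the elements `g` of the product set `HN`, of a factorization
`g = φ g * ((φ g)⁻¹ * g)` which is trivial at `1`. The map `φ` is defined on the whole group so
that it can be evaluated at limits of points of `HN`. -/
structure IsContinuousFactorization (H N : Subgroup Γ) (φ : Γ → Γ) : Prop where
  continuous : Continuous φ
  map_one : φ 1 = 1
  apply_mem : ∀ {g}, g ∈ (H * N : Set Γ) → φ g ∈ H
  inv_apply_mul_mem : ∀ {g}, g ∈ (H * N : Set Γ) → (φ g)⁻¹ * g ∈ N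

/-- The sequence `a` lies in `u g K` for some sequence `u` in `G` tending to `1`: the counterpart
of nearness of the coset `g K` to a hyperreal point represented by `a`. -/
def IsNearAlong {ι : Type*} (l : Filter ι) (G : Subgroup Γ) (g : Γ) (K : Subgroup Γ)
    (a : ι → Γ) : Prop :=
  ∃ u v : ι → Γ, (∀ k, u k ∈ G) ∧ Tendsto u l (𝓝 1) ∧ (∀ k, v k ∈ K) ∧
    ∀ᶠ k in l, a k = u k * g * v k

variable {ι : Type*} {l : Filter ι} {a : ι → Γ} {b c e g : Γ}

lemma IsNearAlong.of_mem_leftCoset {K : Subgroup Γ} (h : IsNearAlong l G g K a)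
    (he : e ∈ g • (K : Set Γ)) : IsNearAlong l G e K a := by
  obtain ⟨u, v, hu, hu1, hv, ha⟩ := h
  obtain ⟨y, hy, rfl⟩ := he
  refine ⟨u, fun k => y⁻¹ * v k, hu, hu1, fun k => K.mul_mem (K.inv_mem hy) (hv k), ?_⟩
  filter_upwards [ha] with k hk
  simp only [hk, smul_eq_mul, mul_assoc, mul_inv_cancel_left]

variable [IsTopologicalGroup Γ] {φ : Γ → Γ}

lemma IsContinuousFactorization.isClosed_mul (hφ : IsContinuousFactorization H N φ)
    (hH : IsClosed (H : Set Γ)) (hN : IsClosed (N : Set Γ)) : IsClosed (H * N : Set Γ) := by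
  have hmul : (H * N : Set Γ) = φ ⁻¹' H ∩ (fun g => (φ g)⁻¹ * g) ⁻¹' N :=
    Set.Subset.antisymm (fun g hg => ⟨hφ.apply_mem hg, hφ.inv_apply_mul_mem hg⟩)
      fun g hg => ⟨φ g, hg.1, _, hg.2, mul_inv_cancel_left _ _⟩
  rw [hmul]
  exact (hH.preimage hφ.continuous).inter (hN.preimage (hφ.continuous.inv.mul continuous_id))

lemma tendsto_mul_inv_of_eventuallyEq {u v w x : ι → Γ} (hu : Tendsto u l (𝓝 1))
    (hw : Tendsto w l (𝓝 1)) (h : ∀ᶠ k in l, u k * b * v k = w k * c * x k) :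
    Tendsto (fun k => x k * (v k)⁻¹) l (𝓝 (c⁻¹ * b)) := by
  have hlim : Tendsto (fun k => c⁻¹ * ((w k)⁻¹ * u k) * b) l (𝓝 (c⁻¹ * b)) := by
    simpa using ((hw.inv.mul hu).const_mul c⁻¹).mul_const b
  refine hlim.congr' ?_
  filter_upwards [h] with k hk
  rw [eq_mul_inv_iff_mul_eq]
  simp only [mul_assoc] at hk ⊢
  rw [hk, inv_mul_cancel_left, inv_mul_cancel_left]

lemma IsNearAlong.leftCoset_inter_nonempty [l.NeBot] (hHN : IsClosed (H * N : Set Γ))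
    (hb : IsNearAlong l G b N a) (hc : IsNearAlong l G c H a) :
    (b • (N : Set Γ) ∩ c • (H : Set Γ)).Nonempty := by
  obtain ⟨u, v, -, hu, hv, huv⟩ := hb
  obtain ⟨w, x, -, hw, hx, hwx⟩ := hc
  have hlim := tendsto_mul_inv_of_eventuallyEq hu hw (huv.and hwx |>.mono fun k hk =>
    hk.1.symm.trans hk.2)
  obtain ⟨h, hh, y, hy, hhy : h * y = c⁻¹ * b⟩ := hHN.mem_of_tendsto hlim
    (Eventually.of_forall fun k => Set.mul_mem_mul (hx k) (N.inv_mem (hv k)))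
  refine ⟨c * h, (mem_leftCoset_iff b).2 ?_, mem_leftCoset c hh⟩
  have hyh : b⁻¹ * (c * h) = y⁻¹ := by
    rw [eq_inv_iff_mul_eq_one, mul_assoc, mul_assoc, hhy, mul_inv_cancel_left, inv_mul_cancel]
  exact hyh ▸ N.inv_mem hy

/-- If `a = u e v = w e x` with `v` in `N` and `x` in `H`, then `g = x v⁻¹` lies in `HN` and tends
to `1`, and `a = (w e (φ g) e⁻¹) e ((φ g)⁻¹ x)`. -/
lemma IsNearAlong.inf (hN : IsNearAlong l G e N a) (hφ : IsContinuousFactorization H N φ)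
    (hHG : H ≤ G) (he : e ∈ G) (hH : IsNearAlong l G e H a) :
    IsNearAlong l G e (N ⊓ H) a := by
  obtain ⟨u, v, -, hu, hv, huv⟩ := hN
  obtain ⟨w, x, hwG, hw, hx, hwx⟩ := hH
  have hmem : ∀ k, x k * (v k)⁻¹ ∈ (H * N : Set Γ) := fun k =>
    Set.mul_mem_mul (hx k) (N.inv_mem (hv k))
  have hlim : Tendsto (fun k => x k * (v k)⁻¹) l (𝓝 1) := by
    simpa only [inv_mul_cancel] using tendsto_mul_inv_of_eventuallyEq hu hw
      (huv.and hwx |>.mono fun k hk => hk.1.symm.trans hk.2)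
  have hφlim : Tendsto (fun k => φ (x k * (v k)⁻¹)) l (𝓝 1) :=
    (hφ.continuous.tendsto' 1 1 hφ.map_one).comp hlim
  refine ⟨fun k => w k * (e * φ (x k * (v k)⁻¹) * e⁻¹), fun k => (φ (x k * (v k)⁻¹))⁻¹ * x k,
    fun k => ?_, ?_, fun k => ⟨?_, ?_⟩, ?_⟩
  · exact G.mul_mem (hwG k) (G.mul_mem (G.mul_mem he (hHG (hφ.apply_mem (hmem k)))) (G.inv_mem he))
  · simpa using hw.mul ((hφlim.const_mul e).mul_const e⁻¹)
  · simpa [mul_assoc] using N.mul_mem (hφ.inv_apply_mul_mem (hmem k)) (hv k)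
  · exact H.mul_mem (H.inv_mem (hφ.apply_mem (hmem k))) (hx k)
  · filter_upwards [hwx] with k hk
    simp only [hk, mul_assoc, inv_mul_cancel_left, mul_inv_cancel_left]

end TopologicalGroup

section PolynomialCurves

open Polynomial

variable {ι : Type*} [Fintype ι] [DecidableEq ι]

/-- A curve of matrices whose entries are polynomials in the parameter, given by a matrix over
`ℝ[X]` so that products of curves are products of matrices. -/
def IsPolynomialCurve (γ : ℝ → Matrix ι ι ℝ) : Prop :=
  ∃ Q : Matrix ι ι ℝ[X], ∀ t, γ t = (evalRingHom t).mapMatrix Q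

lemma IsPolynomialCurve.mul {γ δ : ℝ → Matrix ι ι ℝ} (hγ : IsPolynomialCurve γ)
    (hδ : IsPolynomialCurve δ) : IsPolynomialCurve fun t => γ t * δ t := by
  obtain ⟨Q, hQ⟩ := hγ
  obtain ⟨R, hR⟩ := hδ
  exact ⟨Q * R, fun t => by simp only [hQ, hR, map_mul]⟩

lemma IsPolynomialCurve.comp_neg {γ : ℝ → Matrix ι ι ℝ} (hγ : IsPolynomialCurve γ) :
    IsPolynomialCurve fun t => γ (-t) := by
  obtain ⟨Q, hQ⟩ := hγ
  exact ⟨Q.map fun q => q.comp (-X), fun t => by ext; simp [hQ]⟩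

lemma isPolynomialCurve_unipotentPow (d : ℕ) (a : Matrix ι ι ℝ) :
    IsPolynomialCurve (unipotentPow d a) :=
  ⟨∑ j ∈ Finset.range d, choosePoly j • ((a - 1) ^ j).map C, fun t => by
    ext; simp [unipotentPow, Matrix.sum_apply]⟩

/-- Subsets of the general linear group cut out by polynomial equations in the matrix entries. -/
def IsZariskiClosed (K : Set (GL ι ℝ)) : Prop :=
  ∃ S : Set (MvPolynomial (ι × ι) ℝ),
    K = {g | ∀ p ∈ S, MvPolynomial.eval (fun ij => g ij.1 ij.2) p = 0}

lemma IsZariskiClosed.isClosed {K : Set (GL ι ℝ)} (hK : IsZariskiClosed K) :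
    IsClosed K := by
  obtain ⟨S, rfl⟩ := hK
  simp only [Set.ofPred_forall]
  refine isClosed_biInter fun p _ => isClosed_eq ?_ continuous_const
  exact (MvPolynomial.continuous_eval p).comp
    (continuous_pi fun ij => Units.continuous_val.matrix_elem ij.1 ij.2)

/-- `ℕ` is Zariski dense in `ℝ`. -/
lemma IsZariskiClosed.mem_of_forall_natCast {K : Set (GL ι ℝ)} (hK : IsZariskiClosed K)
    {γ : ℝ → GL ι ℝ} (hγ : IsPolynomialCurve fun t => (γ t : Matrix ι ι ℝ))
    (hmem : ∀ k : ℕ, γ k ∈ K) (t : ℝ) : γ t ∈ K := by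
  obtain ⟨S, rfl⟩ := hK
  obtain ⟨Q, hQ⟩ := hγ
  intro p hp
  let r : ℝ[X] := MvPolynomial.aeval (fun ij : ι × ι => Q ij.1 ij.2) p
  have hr : ∀ s, r.eval s = MvPolynomial.eval (fun ij => γ s ij.1 ij.2) p := by
    intro s
    have hconst : (evalRingHom s).comp (algebraMap ℝ ℝ[X]) = RingHom.id ℝ :=
      RingHom.ext fun _ => eval_C
    simp only [r, hQ, ← coe_evalRingHom, MvPolynomial.map_aeval, hconst]
    rfl
  have hr0 : r = 0 := eq_zero_of_infinite_isRoot r <|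
    (Set.infinite_range_of_injective Nat.cast_injective).mono <| by
      rintro _ ⟨k, rfl⟩
      exact (hr k).trans (hmem k p hp)
  rw [← hr, hr0, eval_zero]

end PolynomialCurves

section UnipotentFactorization

open scoped Matrix.Norms.Operator

variable {ι : Type*} [Fintype ι] [DecidableEq ι] {d : ℕ}

lemma isPolynomialCurve_expUnit_smul_unipotentLog {g : GL ι ℝ}
    (hunip : ((g : Matrix ι ι ℝ) - 1) ^ d = 0) :
    IsPolynomialCurve fun t =>
      (expUnit (t • unipotentLog d (g : Matrix ι ι ℝ)) : Matrix ι ι ℝ) := by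
  simpa only [val_expUnit, exp_smul_unipotentLog hunip] using isPolynomialCurve_unipotentPow d _

lemma unipotentLog_mem_lieSubmodule {K : Subgroup (GL ι ℝ)}
    (hK : IsZariskiClosed (K : Set (GL ι ℝ))) {g : GL ι ℝ} (hg : g ∈ K)
    (hunip : ((g : Matrix ι ι ℝ) - 1) ^ d = 0) :
    unipotentLog d (g : Matrix ι ι ℝ) ∈ lieSubmodule K hK.isClosed :=
  hK.mem_of_forall_natCast (isPolynomialCurve_expUnit_smul_unipotentLog hunip) fun k => by
    simpa only [expUnit_natCast_smul_unipotentLog hunip, SetLike.mem_coe] using K.pow_mem hg k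

lemma unipotentLog_mul_sub_mem_lieSubmodule {N : Subgroup (GL ι ℝ)}
    (hN : IsZariskiClosed (N : Set (GL ι ℝ))) {h y : GL ι ℝ}
    (hh : h ∈ Subgroup.normalizer (N : Set (GL ι ℝ))) (hy : y ∈ N)
    (hunip : ((h : Matrix ι ι ℝ) - 1) ^ d = 0)
    (hunip' : (((h * y : GL ι ℝ) : Matrix ι ι ℝ) - 1) ^ d = 0) :
    unipotentLog d ((h * y : GL ι ℝ) : Matrix ι ι ℝ) - unipotentLog d (h : Matrix ι ι ℝ) ∈
      lieSubmodule N hN.isClosed := by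
  rw [sub_eq_add_neg]
  refine mem_lieSubmodule_of_hasDerivAt hN.isClosed (by simp)
    (hasDerivAt_expUnit_mul_expUnit _ _) (hN.mem_of_forall_natCast ?_ fun k => ?_)
  · simpa only [Units.val_mul, smul_neg, neg_smul] using
      (isPolynomialCurve_expUnit_smul_unipotentLog hunip').mul
        (isPolynomialCurve_expUnit_smul_unipotentLog hunip).comp_neg
  · simpa only [smul_neg, expUnit_neg, expUnit_natCast_smul_unipotentLog hunip,
      expUnit_natCast_smul_unipotentLog hunip', SetLike.mem_coe] using
      mul_pow_mul_inv_pow_mem hh hy k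

variable {H N : Subgroup (GL ι ℝ)}

lemma unipotentLog_mem_sup_lieSubmodule (hH : IsZariskiClosed (H : Set (GL ι ℝ)))
    (hN : IsZariskiClosed (N : Set (GL ι ℝ)))
    (hHN : H ≤ Subgroup.normalizer (N : Set (GL ι ℝ)))
    (hunip : ∀ g ∈ (H * N : Set (GL ι ℝ)), ((g : Matrix ι ι ℝ) - 1) ^ d = 0)
    {g : GL ι ℝ} (hg : g ∈ (H * N : Set (GL ι ℝ))) :
    unipotentLog d (g : Matrix ι ι ℝ) ∈
      lieSubmodule H hH.isClosed ⊔ lieSubmodule N hN.isClosed := by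
  obtain ⟨h, hh, y, hy, rfl⟩ := hg
  have hunip_h := hunip h ⟨h, hh, 1, N.one_mem, mul_one h⟩
  rw [← add_sub_cancel (unipotentLog d (h : Matrix ι ι ℝ)) (unipotentLog d _)]
  exact Submodule.add_mem_sup (unipotentLog_mem_lieSubmodule hH hh hunip_h)
    (unipotentLog_mul_sub_mem_lieSubmodule hN (hHN hh) hy hunip_h (hunip _ (Set.mul_mem_mul hh hy)))

theorem exists_isContinuousFactorization (hH : IsZariskiClosed (H : Set (GL ι ℝ)))
    (hN : IsZariskiClosed (N : Set (GL ι ℝ)))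
    (hHN : H ≤ Subgroup.normalizer (N : Set (GL ι ℝ)))
    (hunip : ∀ g ∈ (H * N : Set (GL ι ℝ)), ((g : Matrix ι ι ℝ) - 1) ^ d = 0) :
    ∃ φ, IsContinuousFactorization H N φ := by
  obtain ⟨P, hP⟩ := exists_linearMap_splitting_sup (lieSubmodule H hH.isClosed)
    (lieSubmodule N hN.isClosed)
  have hPlog {g : GL ι ℝ} (hg : g ∈ (H * N : Set (GL ι ℝ))) :=
    hP _ (unipotentLog_mem_sup_lieSubmodule hH hN hHN hunip hg)
  exact ⟨fun g => expUnit (P (unipotentLog d (g : Matrix ι ι ℝ))),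
    { continuous := continuous_expUnit.comp (P.continuous_of_finiteDimensional.comp
        (continuous_unipotentLog.comp Units.continuous_val))
      map_one := by simp [unipotentLog_one]
      apply_mem := fun hg => expUnit_mem_of_mem_lieSubmodule (hPlog hg).1
      inv_apply_mul_mem := fun {g} hg => by
        simpa only [add_sub_cancel, expUnit_unipotentLog (hunip g hg)] using
          inv_expUnit_mul_expUnit_add_mem hHN (hPlog hg).1 (hPlog hg).2 }⟩

end UnipotentFactorization

section Hyperreal

open scoped Matrix.Norms.Operator

lemma hyperreal_ofSeq_eq_ofSeq_iff {f g : ℕ → ℝ} :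
    Hyperreal.ofSeq f = Hyperreal.ofSeq g ↔ ∀ᶠ k in hyperfilter ℕ, f k = g k :=
  Germ.coe_eq

variable {n : ℕ}

lemma matOfSeq_eq_matOfSeq_iff {u v : ℕ → Mat n ℝ} :
    matOfSeq n u = matOfSeq n v ↔ ∀ᶠ k in hyperfilter ℕ, u k = v k := by
  simp only [← Matrix.ext_iff, eventually_all, ← hyperreal_ofSeq_eq_ofSeq_iff]
  rfl

lemma matOfSeq_mul (u v : ℕ → Mat n ℝ) :
    matOfSeq n u * matOfSeq n v = matOfSeq n fun k => u k * v k := by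
  ext i j
  change ∑ k, Germ.coeRingHom (hyperfilter ℕ : Filter ℕ) (fun m => u m i k) *
    Germ.coeRingHom (hyperfilter ℕ : Filter ℕ) (fun m => v m k j) = _
  simp only [← map_mul, ← map_sum]
  refine congrArg Hyperreal.ofSeq (funext fun m => ?_)
  simp [Matrix.mul_apply]

lemma forall_infinitesimal_matOfSeq_sub_one_iff {u : ℕ → Mat n ℝ} :
    (∀ i j, Hyperreal.Infinitesimal (matOfSeq n u i j - (1 : Mat n Hyperreal) i j)) ↔
      Tendsto u (hyperfilter ℕ) (𝓝 1) := by
  have hone : ∀ i j, (1 : Mat n Hyperreal) i j = ((1 : Mat n ℝ) i j : Hyperreal) := fun i j => by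
    rw [Matrix.one_apply, Matrix.one_apply]; split_ifs <;> rfl
  have hentry : ∀ i j, matOfSeq n u i j - (1 : Mat n Hyperreal) i j =
      Hyperreal.ofSeq (fun k => u k i j - (1 : Mat n ℝ) i j) := fun i j => by
    rw [hone]; rfl
  simp only [hentry, Hyperreal.Infinitesimal, Hyperreal.isSt_ofSeq_iff_tendsto,
    tendsto_sub_nhds_zero_iff]
  exact (tendsto_pi_nhds.trans (forall_congr' fun i => tendsto_pi_nhds)).symm

/-- A set of invertible real matrices, as a set of matrices: the passage from subgroups of the
general linear group to the sets of matrices in `NearCoset`. -/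
def matSet (K : Set (GL (Fin n) ℝ)) : Set (Mat n ℝ) := Units.val '' K

lemma singleton_mul_matSet (g : GL (Fin n) ℝ) (K : Set (GL (Fin n) ℝ)) :
    {(g : Mat n ℝ)} * matSet K = matSet (g • K) := by
  rw [matSet, matSet, Set.singleton_mul, Set.image_image, ← Set.image_smul, Set.image_image]
  rfl

lemma matSet_inter (K L : Set (GL (Fin n) ℝ)) : matSet (K ∩ L) = matSet K ∩ matSet L :=
  Set.image_inter Units.val_injective

lemma mem_matSharp_matSet_iff {K : Subgroup (GL (Fin n) ℝ)} {A : Mat n Hyperreal} :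
    A ∈ matSharp n (matSet K) ↔
      ∃ u : ℕ → GL (Fin n) ℝ, (∀ k, u k ∈ K) ∧ A = matOfSeq n fun k => (u k : Mat n ℝ) := by
  constructor
  · rintro ⟨u, hu, rfl⟩
    have hex : ∀ k, ∃ g ∈ K, u k ∈ matSet K → (g : Mat n ℝ) = u k := fun k => by
      by_cases hk : u k ∈ matSet K
      · obtain ⟨g, hg, hgu⟩ := hk
        exact ⟨g, hg, fun _ => hgu⟩
      · exact ⟨1, K.one_mem, fun h => absurd h hk⟩
    choose v hvK hv using hex
    exact ⟨v, hvK, matOfSeq_eq_matOfSeq_iff.2 (hu.mono fun k hk => (hv k hk).symm)⟩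
  · rintro ⟨u, hu, rfl⟩
    exact ⟨_, Eventually.of_forall fun k => Set.mem_image_of_mem _ (hu k), rfl⟩

variable {G K : Subgroup (GL (Fin n) ℝ)} {g : GL (Fin n) ℝ}

lemma nearCoset_matSet_iff_exists {α : Mat n Hyperreal} :
    NearCoset n (matSet G) g (matSet K) α ↔
      ∃ u v : ℕ → GL (Fin n) ℝ, (∀ k, u k ∈ G) ∧ Tendsto u (hyperfilter ℕ) (𝓝 1) ∧
        (∀ k, v k ∈ K) ∧ α = matOfSeq n fun k => ((u k * g * v k : GL (Fin n) ℝ) : Mat n ℝ) := by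
  have hmul : ∀ u v : ℕ → GL (Fin n) ℝ,
      (matOfSeq n fun k => (u k : Mat n ℝ)) * (matCast g * matOfSeq n fun k => (v k : Mat n ℝ)) =
        matOfSeq n fun k => ((u k * g * v k : GL (Fin n) ℝ) : Mat n ℝ) := fun u v => by
    rw [show matCast (g : Mat n ℝ) = matOfSeq n fun _ => (g : Mat n ℝ) from rfl]
    simp only [matOfSeq_mul, Units.val_mul, mul_assoc]
  simp only [NearCoset, Set.singleton_mul, Set.mem_mul, Set.mem_image, muSet, Set.mem_ofPred_eq,
    mem_matSharp_matSet_iff]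
  constructor
  · rintro ⟨_, ⟨⟨u, hu, rfl⟩, hu1⟩, _, ⟨_, ⟨v, hv, rfl⟩, rfl⟩, rfl⟩
    exact ⟨u, v, hu, units_tendsto_iff_tendsto_val.2
      (forall_infinitesimal_matOfSeq_sub_one_iff.1 hu1), hv, hmul u v⟩
  · rintro ⟨u, v, hu, hu1, hv, rfl⟩
    exact ⟨_, ⟨⟨u, hu, rfl⟩, forall_infinitesimal_matOfSeq_sub_one_iff.2
      (units_tendsto_iff_tendsto_val.1 hu1)⟩, _, ⟨_, ⟨v, hv, rfl⟩, rfl⟩, hmul u v⟩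

lemma nearCoset_matSet_iff {a : ℕ → GL (Fin n) ℝ} :
    NearCoset n (matSet G) g (matSet K) (matOfSeq n fun k => (a k : Mat n ℝ)) ↔
      IsNearAlong (hyperfilter ℕ : Filter ℕ) G g K a := by
  simp only [nearCoset_matSet_iff_exists, IsNearAlong, matOfSeq_eq_matOfSeq_iff, Units.val_inj]

end Hyperreal

section RealUnipotentGroup

variable {n : ℕ}

lemma det_eq_one_of_mem_UTset {A : Mat n ℝ} (hA : A ∈ UTset n) : A.det = 1 := by
  rw [Matrix.det_of_isUpperTriangular (M := A) fun i j => hA.2 i j]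
  exact Finset.prod_eq_one fun i _ => hA.1 i

lemma sub_one_pow_eq_zero_of_mem_UTset {A : Mat n ℝ} (hA : A ∈ UTset n) : (A - 1) ^ n = 0 := by
  have hcharpoly := Matrix.aeval_self_charpoly A
  rw [Matrix.charpoly_of_isUpperTriangular A fun i j => hA.2 i j] at hcharpoly
  simpa [hA.1] using hcharpoly

namespace IsRealUnipotentGroup

variable {K : Set (Mat n ℝ)}

lemma subset_UTset (hK : IsRealUnipotentGroup n K) : K ⊆ UTset n := by
  obtain ⟨⟨S, rfl⟩, -⟩ := hK
  exact fun A hA => hA.1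

/-- A real unipotent group, as a subgroup of the general linear group. -/
def toSubgroup (hK : IsRealUnipotentGroup n K) : Subgroup (GL (Fin n) ℝ) where
  carrier := {g | (g : Mat n ℝ) ∈ K}
  one_mem' := hK.2.1
  mul_mem' ha hb := hK.2.2.1 _ ha _ hb
  inv_mem' {a} ha := by simpa using hK.2.2.2 _ ha

lemma mem_toSubgroup {hK : IsRealUnipotentGroup n K} {g : GL (Fin n) ℝ} :
    g ∈ hK.toSubgroup ↔ (g : Mat n ℝ) ∈ K := Iff.rfl

lemma isUnit_of_mem (hK : IsRealUnipotentGroup n K) {A : Mat n ℝ} (hA : A ∈ K) : IsUnit A := by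
  rw [Matrix.isUnit_iff_isUnit_det, det_eq_one_of_mem_UTset (hK.subset_UTset hA)]
  exact isUnit_one

lemma matSet_toSubgroup (hK : IsRealUnipotentGroup n K) : matSet hK.toSubgroup = K :=
  Set.image_preimage_eq_of_subset fun _ hA => hK.isUnit_of_mem hA

lemma isZariskiClosed_toSubgroup (hK : IsRealUnipotentGroup n K) :
    IsZariskiClosed (hK.toSubgroup : Set (GL (Fin n) ℝ)) := by
  obtain ⟨S, hS⟩ := hK.1
  refine ⟨.range (fun i => .X (i, i) - 1) ∪ .X '' {ij | (ij.2 : ℕ) < ij.1} ∪ S, ?_⟩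
  ext g
  rw [SetLike.mem_coe, mem_toSubgroup, hS]
  simp only [UTset, Set.mem_ofPred_eq, Set.mem_union, or_imp, forall_and, Set.forall_mem_range,
    Set.forall_mem_image, Prod.forall, map_sub, map_one, MvPolynomial.eval_X, sub_eq_zero]
  rfl

end IsRealUnipotentGroup

variable {G H N : Set (Mat n ℝ)}

lemma IsNormalIn.toSubgroup_le_normalizer (h : IsNormalIn n G N) (hH : IsRealAlgSubgroup n G H)
    (hN : IsRealUnipotentGroup n N) :
    hH.2.toSubgroup ≤ Subgroup.normalizer (hN.toSubgroup : Set (GL (Fin n) ℝ)) :=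
  Subgroup.le_normalizer_iff.2 fun g hg x hx =>
    IsRealUnipotentGroup.mem_toSubgroup.2 <| by simpa using h g (hH.1 hg) x hx

lemma IsRealUnipotentGroup.sub_one_pow_eq_zero_of_mem_mul (hG : IsRealUnipotentGroup n G)
    (hH : IsRealAlgSubgroup n G H) (hN : IsRealAlgSubgroup n G N) :
    ∀ g ∈ (hH.2.toSubgroup * hN.2.toSubgroup : Set (GL (Fin n) ℝ)),
      ((g : Mat n ℝ) - 1) ^ n = 0 := by
  rintro _ ⟨h, hh, y, hy, rfl⟩
  exact sub_one_pow_eq_zero_of_mem_UTset (hG.subset_UTset (hG.2.2.1 _ (hH.1 hh) _ (hN.1 hy)))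

end RealUnipotentGroup

theorem stmt4_general {n d : ℕ} {G H N : Subgroup (GL (Fin n) ℝ)} (hHG : H ≤ G)
    (hH : IsZariskiClosed (H : Set (GL (Fin n) ℝ))) (hN : IsZariskiClosed (N : Set (GL (Fin n) ℝ)))
    (hHN : H ≤ Subgroup.normalizer (N : Set (GL (Fin n) ℝ)))
    (hunip : ∀ g ∈ (H * N : Set (GL (Fin n) ℝ)), ((g : Mat n ℝ) - 1) ^ d = 0)
    (α : Mat n Hyperreal) (b c : Mat n ℝ) (hb : IsUnit b) (hc : c ∈ matSet G)
    (hnearN : NearCoset n (matSet G) b (matSet N) α)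
    (hnearH : NearCoset n (matSet G) c (matSet H) α) :
    (({b} * matSet N) ∩ ({c} * matSet H)).Nonempty ∧
    ∀ e ∈ ({b} * matSet N) ∩ ({c} * matSet H),
      ({b} * matSet N) ∩ ({c} * matSet H) = {e} * (matSet N ∩ matSet H) ∧
        NearCoset n (matSet G) e (matSet N ∩ matSet H) α := by
  obtain ⟨b, rfl⟩ := hb
  obtain ⟨c, hcG, rfl⟩ := hc
  obtain ⟨u, v, -, -, -, rfl⟩ := nearCoset_matSet_iff_exists.1 hnearN
  rw [nearCoset_matSet_iff] at hnearN hnearH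
  obtain ⟨φ, hφ⟩ := exists_isContinuousFactorization hH hN hHN hunip
  have hclosed : IsClosed (H * N : Set (GL (Fin n) ℝ)) := hφ.isClosed_mul hH.isClosed hN.isClosed
  simp only [singleton_mul_matSet, ← matSet_inter, ← Subgroup.coe_inf]
  refine ⟨(hnearN.leftCoset_inter_nonempty hclosed hnearH).image _, ?_⟩
  rintro _ ⟨e, he, rfl⟩
  have heG : e ∈ G := by
    obtain ⟨h, hh, rfl⟩ := he.2
    exact G.mul_mem hcG (hHG hh)
  constructor
  · rw [leftCoset_inter_leftCoset_eq he, singleton_mul_matSet]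
  · exact nearCoset_matSet_iff.2 <|
      (hnearN.of_mem_leftCoset he.1).inf hφ hHG heG (hnearH.of_mem_leftCoset he.2)

/-- if `bN` and `cH` are near `α` with `N` normal, then `bN ∩ cH` is a
nonempty coset of `N ∩ H` near `α`. -/
theorem stmt4 {n : ℕ} (G : Set (Mat n ℝ)) (hG : IsRealUnipotentGroup n G)
    (H N : Set (Mat n ℝ)) (hH : IsRealAlgSubgroup n G H) (hN : IsRealAlgSubgroup n G N)
    (hNnormal : IsNormalIn n G N)
    (α : Mat n Hyperreal) (hα : α ∈ matSharp n G)
    (b c : Mat n ℝ) (hb : b ∈ G) (hc : c ∈ G)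
    (hnearN : NearCoset n G b N α) (hnearH : NearCoset n G c H α) :
    (({b} * N) ∩ ({c} * H)).Nonempty ∧
    ∀ e ∈ ({b} * N) ∩ ({c} * H),
      ({b} * N) ∩ ({c} * H) = {e} * (N ∩ H) ∧ NearCoset n G e (N ∩ H) α := by
  have hgeneral := stmt4_general (G := hG.toSubgroup) (fun _ hh => hH.1 hh)
    hH.2.isZariskiClosed_toSubgroup hN.2.isZariskiClosed_toSubgroup
    (hNnormal.toSubgroup_le_normalizer hH hN.2) (hG.sub_one_pow_eq_zero_of_mem_mul hH hN) α b c
  simp only [IsRealUnipotentGroup.matSet_toSubgroup] at hgeneral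
  exact hgeneral (hG.isUnit_of_mem hb) hc hnearN hnearH
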